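/- arXiv:2307.15788 — 2 statements merged into one kernel-verified Lean document; each statement's English description precedes it below -/
import Mathlib

section
/- Let n ≥ 1, L ≥ 2, let m₁,…,m_L be positive integers with m₁+⋯+m_L = n, and let λ₁* < ⋯ < λ_L* be real numbers with Σᵢ mᵢ·λᵢ* = 0. Set r := min{λ*_{i+1} − λ*_i : 1 ≤ i ≤ L−1} and let ε be a real number with 0 < ε ≤ r/4. Let H : B₄(0) → Sym₀(n) be a C^∞ map on the open Euclidean ball of radius 4 in ℝⁿ such that for every x in the closed ball of radius 2 and every i ∈ {1,…,L}, exactly mᵢ eigenvalues of H(x), counted with multiplicity, lie in the open interval (λᵢ* − ε, λᵢ* + ε). Then there exist C^∞ functions λ₁,…,λ_L : B₂(0) → ℝ, C^∞ maps Sᵢ : B₂(0) → Sym₀(mᵢ) for i = 1,…,L, and a C^∞ map P : B₂(0) → O(n) such that for every x ∈ B₂(0): (i) P(x)·H(x)·P(x)ᵀ equals the block diagonal matrix with diagonal blocks λ₁(x)·I_{m₁}+S₁(x), …, λ_L(x)·I_{m_L}+S_L(x); (ii) min{|λ_{i+1}(x) − λ_i(x)| : 1 ≤ i ≤ L−1}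 ≥ r/2; (iii) max{|λ_i(x) − λ_i*| : 1 ≤ i ≤ L} ≤ ε; and (iv) max{‖S_i(x)‖ : 1 ≤ i ≤ L} ≤ 4ε. -/
open Matrix Metric

/-- The operator norm (ℓ²-operator norm) of a square real matrix. -/
noncomputable def matrixOpNorm {k : ℕ} (A : Matrix (Fin k) (Fin k) ℝ) : ℝ :=
  ‖(Matrix.toEuclideanCLM (𝕜 := ℝ) A : EuclideanSpace ℝ (Fin k) →L[ℝ] EuclideanSpace ℝ (Fin k))‖

section helpers

open scoped Matrix.Norms.L2Operator Topology

def QPos {n : ℕ} (B : Matrix (Fin n) (Fin n) ℝ) : Prop := ∀ v : Fin n → ℝ, v ≠ 0 → 0 < v ⬝ᵥ (B *ᵥ v)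

lemma QPos.nonneg {n : ℕ} {B : Matrix (Fin n) (Fin n) ℝ} (h : QPos B) (v : Fin n → ℝ) :
    0 ≤ v ⬝ᵥ (B *ᵥ v) := by
  by_cases hv : v = 0
  · simp [hv]
  · exact (h v hv).le

lemma trace_quad {n : ℕ} (B X : Matrix (Fin n) (Fin n) ℝ) :
    (Xᵀ * B * X).trace = ∑ j, (Xᵀ j) ⬝ᵥ (B *ᵥ (Xᵀ j)) := by
  rw [Matrix.mul_assoc, Matrix.trace]
  refine Finset.sum_congr rfl fun j _ => ?_
  simp [Matrix.mul_apply, dotProduct, mulVec, Matrix.transpose_apply]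

lemma sylvester {n : ℕ} {B C X : Matrix (Fin n) (Fin n) ℝ} (hB : QPos B) (hC : QPos C)
    (h : B * X + X * C = 0) : X = 0 := by
  have h1 : (Xᵀ * B * X).trace + (X * C * Xᵀ).trace = 0 := by
    have : (Xᵀ * (B * X + X * C)).trace = 0 := by rw [h]; simp
    rw [Matrix.mul_add, Matrix.trace_add, ← Matrix.mul_assoc] at this
    rw [Matrix.trace_mul_comm (X * C) Xᵀ]
    exact this
  have h2 := trace_quad C Xᵀ
  rw [Matrix.transpose_transpose] at h2
  rw [trace_quad, h2] at h1
  have h3 : ∑ j, (Xᵀ j) ⬝ᵥ (B *ᵥ (Xᵀ j)) = 0 := by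
    have a : 0 ≤ ∑ j, (Xᵀ j) ⬝ᵥ (B *ᵥ (Xᵀ j)) := Finset.sum_nonneg fun j _ => hB.nonneg _
    have b : 0 ≤ ∑ j, (X j) ⬝ᵥ (C *ᵥ (X j)) := Finset.sum_nonneg fun j _ => hC.nonneg _
    linarith
  have h3' := (Finset.sum_eq_zero_iff_of_nonneg (fun j _ => hB.nonneg _)).1 h3
  have h4 : ∀ j, Xᵀ j = 0 := by
    intro j
    by_contra hj
    exact absurd (h3' j (Finset.mem_univ _)) (hB _ hj).ne'
  ext i j
  exact congrFun (h4 j) i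

lemma QPos.eventually {n : ℕ} {B : Matrix (Fin n) (Fin n) ℝ} (h : QPos B) :
    ∀ᶠ C in 𝓝 B, QPos C := by
  have h1 : ∀ᶠ C in 𝓝 B, ∀ v ∈ sphere (0 : Fin n → ℝ) 1, 0 < v ⬝ᵥ (C *ᵥ v) := by
    apply (isCompact_sphere (0 : Fin n → ℝ) 1).eventually_forall_of_forall_eventually
    intro v hv
    have hv0 : v ≠ 0 := by
      rintro rfl
      simp at hv
    have hc : Continuous (fun z : Matrix (Fin n) (Fin n) ℝ × (Fin n → ℝ) =>
        z.2 ⬝ᵥ (z.1 *ᵥ z.2)) := by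
      exact continuous_snd.dotProduct (continuous_fst.matrix_mulVec continuous_snd)
    exact hc.continuousAt.eventually (lt_mem_nhds (h v hv0))
  filter_upwards [h1] with C hC v hv
  have hn : ‖v‖ ≠ 0 := norm_ne_zero_iff.2 hv
  have := hC (‖v‖⁻¹ • v) (by simp [norm_smul, hn])
  rw [mulVec_smul, smul_dotProduct, dotProduct_smul, smul_eq_mul, smul_eq_mul] at this
  have hp : 0 < ‖v‖⁻¹ := inv_pos.2 (norm_pos_iff.2 hv)
  exact (mul_pos_iff_of_pos_left hp).1 ((mul_pos_iff_of_pos_left hp).1 this)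

lemma QPos.isUnit {n : ℕ} {B : Matrix (Fin n) (Fin n) ℝ} (h : QPos B) : IsUnit B := by
  rw [← Matrix.mulVec_injective_iff_isUnit]
  intro v w hvw
  by_contra hne
  have := h (v - w) (sub_ne_zero.2 hne)
  have hvw' : B *ᵥ v = B *ᵥ w := hvw
  rw [mulVec_sub, hvw'] at this
  simp at this

lemma contDiffWithinAt_sqrt {n : ℕ} {E : Type*} [NormedAddCommGroup E] [NormedSpace ℝ E]
    {s : Set E} {x₀ : E} (hx₀ : x₀ ∈ s) {A B : E → Matrix (Fin n) (Fin n) ℝ}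
    (hA : ContDiffWithinAt ℝ (⊤ : ℕ∞) A s x₀) (hB : ∀ x ∈ s, QPos (B x))
    (hAB : ∀ x ∈ s, B x * B x = A x) : ContDiffWithinAt ℝ (⊤ : ℕ∞) B s x₀ := by
  set F : Matrix (Fin n) (Fin n) ℝ → Matrix (Fin n) (Fin n) ℝ := fun X => X * X with hF
  have hFs : ContDiffAt ℝ (⊤ : ℕ∞) F (B x₀) := contDiffAt_id.mul contDiffAt_id
  let T : Matrix (Fin n) (Fin n) ℝ →ₗ[ℝ] Matrix (Fin n) (Fin n) ℝ :=
    LinearMap.mulLeft ℝ (B x₀) + LinearMap.mulRight ℝ (B x₀)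
  have hTinj : Function.Injective T := by
    rw [injective_iff_map_eq_zero]
    intro X hX
    exact sylvester (hB _ hx₀) (hB _ hx₀) (by simpa [T] using hX)
  let Te := (LinearEquiv.ofInjectiveEndo T hTinj).toContinuousLinearEquiv
  have hF' : HasFDerivAt F (Te : Matrix (Fin n) (Fin n) ℝ →L[ℝ] Matrix (Fin n) (Fin n) ℝ) (B x₀) := by
    have := (hasFDerivAt_id (𝕜 := ℝ) (B x₀)).mul' (hasFDerivAt_id (𝕜 := ℝ) (B x₀))
    refine this.congr_fderiv ?_
    ext1 X
    simp [Te, T]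
  have hn : ((⊤ : ℕ∞) : WithTop ℕ∞) ≠ 0 := by simp
  have hg := hFs.to_localInverse hF' hn
  have hst := hFs.hasStrictFDerivAt' hF' hn
  have h1 := hst.eventually_right_inverse
  have h2 := hst.localInverse_tendsto
  set g := hFs.localInverse hF' hn with hgdef
  have hFA : F (B x₀) = A x₀ := hAB _ hx₀
  rw [hFA] at hg h1 h2
  have hcont : Filter.Tendsto A (𝓝[s] x₀) (𝓝 (A x₀)) := hA.continuousWithinAt
  have hcomp : ContDiffWithinAt ℝ (⊤ : ℕ∞) (fun x => g (A x)) s x₀ :=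
    hg.comp_contDiffWithinAt x₀ hA
  have hev : ∀ᶠ x in 𝓝[s] x₀, B x = g (A x) := by
    have hp := (h2.comp hcont).eventually (hB _ hx₀).eventually
    have hr := hcont.eventually h1
    filter_upwards [hp, hr, self_mem_nhdsWithin] with x hpx hrx hxs
    have hrx' : g (A x) * g (A x) = A x := hrx
    have hpx' : QPos (g (A x)) := hpx
    have := sylvester (X := B x - g (A x)) (hB x hxs) hpx' (by
      rw [mul_sub, sub_mul, hAB x hxs, hrx']; abel)
    exact sub_eq_zero.1 this
  exact hcomp.congr_of_eventuallyEq hev (hev.self_of_nhdsWithin hx₀)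

/-- `V diag(c) Vᵀ`. -/
def dg {n : ℕ} (V : Matrix (Fin n) (Fin n) ℝ) (c : Fin n → ℝ) : Matrix (Fin n) (Fin n) ℝ :=
  V * diagonal c * Vᵀ

section dg
variable {n : ℕ} {V : Matrix (Fin n) (Fin n) ℝ}

lemma dg_mul (hV : Vᵀ * V = 1) (c d : Fin n → ℝ) : dg V c * dg V d = dg V (fun a => c a * d a) := by
  have : dg V c * dg V d = V * diagonal c * (Vᵀ * V) * diagonal d * Vᵀ := by
    simp only [dg, Matrix.mul_assoc]
  rw [this, hV, Matrix.mul_one, Matrix.mul_assoc V, diagonal_mul_diagonal, dg]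

lemma dg_one (hV : Vᵀ * V = 1) : dg V (fun _ => 1) = 1 := by
  have : (diagonal (fun _ => 1) : Matrix (Fin n) (Fin n) ℝ) = 1 := diagonal_one
  rw [dg, this, Matrix.mul_one, mul_eq_one_comm.1 hV]

lemma dg_sub (c d : Fin n → ℝ) : dg V c - dg V d = dg V (fun a => c a - d a) := by
  simp only [dg, ← Matrix.mul_sub, ← Matrix.sub_mul, diagonal_sub]

lemma dg_smul (t : ℝ) (c : Fin n → ℝ) : t • dg V c = dg V (fun a => t * c a) := by
  have : (diagonal (fun a => t * c a) : Matrix (Fin n) (Fin n) ℝ) = t • diagonal c := by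
    ext i j; by_cases h : i = j <;> simp [h, diagonal]
  simp only [dg, this, Matrix.mul_smul, Matrix.smul_mul]

lemma dg_sum {ι : Type*} (s : Finset ι) (c : ι → Fin n → ℝ) :
    ∑ i ∈ s, dg V (c i) = dg V (fun a => ∑ i ∈ s, c i a) := by
  have : (diagonal (fun a => ∑ i ∈ s, c i a) : Matrix (Fin n) (Fin n) ℝ) = ∑ i ∈ s, diagonal (c i) := by
    ext i j
    by_cases h : i = j <;> simp [h, Matrix.sum_apply, diagonal]
  simp only [dg, this, Matrix.mul_sum, Matrix.sum_mul]

lemma dg_transpose (c : Fin n → ℝ) : (dg V c)ᵀ = dg V c := by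
  simp [dg, Matrix.mul_assoc]

lemma dg_quad (c : Fin n → ℝ) (v : Fin n → ℝ) :
    v ⬝ᵥ (dg V c *ᵥ v) = ∑ a, c a * (Vᵀ *ᵥ v) a ^ 2 := by
  rw [dg, ← mulVec_mulVec, ← mulVec_mulVec, dotProduct_mulVec, ← mulVec_transpose]
  simp only [dotProduct, mulVec_diagonal]
  exact Finset.sum_congr rfl fun a _ => by ring

lemma dg_qpos (hV : Vᵀ * V = 1) {c : Fin n → ℝ} (hc : ∀ a, 0 < c a) : QPos (dg V c) := by
  intro v hv
  rw [dg_quad]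
  have hw : Vᵀ *ᵥ v ≠ 0 := by
    intro h
    apply hv
    have : V *ᵥ (Vᵀ *ᵥ v) = v := by rw [mulVec_mulVec, mul_eq_one_comm.1 hV, one_mulVec]
    rw [← this, h, mulVec_zero]
  obtain ⟨a, ha⟩ := Function.ne_iff.1 hw
  refine Finset.sum_pos' (fun b _ => mul_nonneg (hc b).le (sq_nonneg _)) ⟨a, Finset.mem_univ _, ?_⟩
  exact mul_pos (hc a) (by have : (Vᵀ *ᵥ v) a ≠ 0 := ha
                           positivity)

end dg

lemma norm_le_one_of_iso {p q : ℕ} (J : Matrix (Fin p) (Fin q) ℝ) (h : Jᵀ * J = 1) : ‖J‖ ≤ 1 := by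
  have h1 := l2_opNorm_conjTranspose_mul_self J
  rw [conjTranspose_eq_transpose_of_trivial, h] at h1
  have h2 : ‖(1 : Matrix (Fin q) (Fin q) ℝ)‖ ≤ 1 := by
    rw [← diagonal_one, l2_opNorm_diagonal]
    exact (pi_norm_le_iff_of_nonneg zero_le_one).2 fun i => by simp
  nlinarith [norm_nonneg J]

lemma norm_transpose_mat {p q : ℕ} (J : Matrix (Fin p) (Fin q) ℝ) : ‖Jᵀ‖ = ‖J‖ := by
  rw [← conjTranspose_eq_transpose_of_trivial, l2_opNorm_conjTranspose]

/-- compression by an isometry does not increase the norm. -/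
lemma norm_compress {p q : ℕ} (J : Matrix (Fin p) (Fin q) ℝ) (h : Jᵀ * J = 1)
    (X : Matrix (Fin p) (Fin p) ℝ) : ‖Jᵀ * X * J‖ ≤ ‖X‖ := by
  have h1 := norm_le_one_of_iso J h
  calc ‖Jᵀ * X * J‖ ≤ ‖Jᵀ * X‖ * ‖J‖ := l2_opNorm_mul _ _
    _ ≤ ‖Jᵀ‖ * ‖X‖ * ‖J‖ := by gcongr; exact l2_opNorm_mul _ _
    _ ≤ 1 * ‖X‖ * 1 := by rw [norm_transpose_mat]; gcongr
    _ = ‖X‖ := by ring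

lemma norm_dg_le {n : ℕ} {V : Matrix (Fin n) (Fin n) ℝ} (hV : Vᵀ * V = 1) {c : Fin n → ℝ} {ε : ℝ} (hε : 0 ≤ ε)
    (hc : ∀ a, |c a| ≤ ε) : ‖dg V c‖ ≤ ε := by
  have := norm_compress Vᵀ (by simpa using mul_eq_one_comm.1 hV) (diagonal c)
  rw [transpose_transpose, l2_opNorm_diagonal] at this
  exact this.trans ((pi_norm_le_iff_of_nonneg hε).2 hc)

lemma abs_entry_le {q : ℕ} (X : Matrix (Fin q) (Fin q) ℝ) (a : Fin q) : |X a a| ≤ ‖X‖ := by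
  have h := norm_compress (p := q) (q := 1) (Matrix.of fun b _ => if b = a then 1 else 0)
    (by ext i j; fin_cases i; fin_cases j; simp [Matrix.mul_apply]) X
  refine le_trans (le_of_eq ?_) h
  have : ((Matrix.of fun b (_ : Fin 1) => if b = a then (1 : ℝ) else 0)ᵀ * X *
      (Matrix.of fun b (_ : Fin 1) => if b = a then (1 : ℝ) else 0)) = diagonal fun _ => X a a := by
    ext i j; simp [Matrix.mul_apply, Subsingleton.elim i j]
  rw [this, l2_opNorm_diagonal]
  simp

lemma spectral_dg {n : ℕ} {A : Matrix (Fin n) (Fin n) ℝ} (hA : A.IsHermitian) :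
    ∃ V : Matrix (Fin n) (Fin n) ℝ, Vᵀ * V = 1 ∧ A = dg V hA.eigenvalues := by
  refine ⟨hA.eigenvectorUnitary, ?_, ?_⟩
  · have := Unitary.coe_star_mul_self hA.eigenvectorUnitary
    rwa [star_eq_conjTranspose, conjTranspose_eq_transpose_of_trivial] at this
  · have := hA.spectral_theorem
    rw [Unitary.conjStarAlgAut_apply] at this
    conv_lhs => rw [this]
    simp only [dg, star_eq_conjTranspose, conjTranspose_eq_transpose_of_trivial]
    rfl

lemma exists_sqrt {n : ℕ} {A : Matrix (Fin n) (Fin n) ℝ} (hA : A.IsSymm) (hp : QPos A) :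
    ∃ B : Matrix (Fin n) (Fin n) ℝ, Bᵀ = B ∧ QPos B ∧ B * B = A := by
  have hA' : A.IsHermitian := by
    rw [IsHermitian, conjTranspose_eq_transpose_of_trivial]; exact hA
  obtain ⟨V, hV, hAV⟩ := spectral_dg hA'
  have hd : ∀ a, 0 < hA'.eigenvalues a := by
    intro a
    have h1 := hp (V *ᵥ Pi.single a 1) (by
      intro h
      have : Vᵀ *ᵥ (V *ᵥ Pi.single a 1) = Pi.single a 1 := by rw [mulVec_mulVec, hV, one_mulVec]
      rw [h, mulVec_zero] at this
      have := congrFun this a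
      simp at this)
    rw [hAV, dg_quad, mulVec_mulVec, hV, one_mulVec] at h1
    simpa [Pi.single_apply] using h1
  refine ⟨dg V fun a => √(hA'.eigenvalues a), dg_transpose _, dg_qpos hV fun a => Real.sqrt_pos.2 (hd a), ?_⟩
  rw [dg_mul hV]
  conv_rhs => rw [hAV]
  congr 1
  funext a
  exact Real.mul_self_sqrt (hd a).le

section smooth
variable {n : ℕ} {E : Type*} [NormedAddCommGroup E] [NormedSpace ℝ E] {s : Set E}

lemma contDiffOn_transpose {A : E → Matrix (Fin n) (Fin n) ℝ}
    (hA : ContDiffOn ℝ (⊤ : ℕ∞) A s) : ContDiffOn ℝ (⊤ : ℕ∞) (fun x => (A x)ᵀ) s := by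
  let T := LinearMap.toContinuousLinearMap
    (Matrix.transposeLinearEquiv (Fin n) (Fin n) ℝ ℝ).toLinearMap
  exact T.contDiff.comp_contDiffOn hA

lemma contDiffOn_entry {A : E → Matrix (Fin n) (Fin n) ℝ}
    (hA : ContDiffOn ℝ (⊤ : ℕ∞) A s) (a b : Fin n) :
    ContDiffOn ℝ (⊤ : ℕ∞) (fun x => A x a b) s := by
  let T := LinearMap.toContinuousLinearMap (Matrix.entryLinearMap ℝ ℝ a b : Matrix (Fin n) (Fin n) ℝ →ₗ[ℝ] ℝ)
  exact T.contDiff.comp_contDiffOn hA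

lemma contDiffOn_of_entry {A : E → Matrix (Fin n) (Fin n) ℝ}
    (hA : ∀ a b, ContDiffOn ℝ (⊤ : ℕ∞) (fun x => A x a b) s) : ContDiffOn ℝ (⊤ : ℕ∞) A s := by
  have : A = fun x => ∑ a, ∑ b, A x a b • Matrix.single a b (1 : ℝ) := by
    funext x
    conv_lhs => rw [Matrix.matrix_eq_sum_single (A x)]
    simp
  rw [this]
  refine ContDiffOn.sum fun a _ => ContDiffOn.sum fun b _ => ?_
  exact (hA a b).smul contDiffOn_const

lemma contDiffOn_matInv {A : E → Matrix (Fin n) (Fin n) ℝ}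
    (hA : ContDiffOn ℝ (⊤ : ℕ∞) A s) (hu : ∀ x ∈ s, IsUnit (A x)) :
    ContDiffOn ℝ (⊤ : ℕ∞) (fun x => (A x)⁻¹) s := by
  intro x hx
  obtain ⟨u, hu⟩ := hu x hx
  have h1 : ContDiffAt ℝ (⊤ : ℕ∞) (Ring.inverse : Matrix (Fin n) (Fin n) ℝ → _) (A x) := by
    rw [← hu]; exact contDiffAt_ringInverse ℝ u
  have h2 := h1.comp_contDiffWithinAt x (hA x hx)
  refine h2.congr (fun y _ => ?_) ?_ <;> simp [Matrix.nonsing_inv_eq_ringInverse]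

lemma contDiffOn_sqrt {A B : E → Matrix (Fin n) (Fin n) ℝ}
    (hA : ContDiffOn ℝ (⊤ : ℕ∞) A s) (hB : ∀ x ∈ s, QPos (B x))
    (hAB : ∀ x ∈ s, B x * B x = A x) : ContDiffOn ℝ (⊤ : ℕ∞) B s :=
  fun x hx => contDiffWithinAt_sqrt hx (hA x hx) hB hAB

end smooth

lemma norm_proj_le {n : ℕ} {Q : Matrix (Fin n) (Fin n) ℝ} (h1 : Qᵀ = Q) (h2 : Q * Q = Q) : ‖Q‖ ≤ 1 := by
  have h := l2_opNorm_conjTranspose_mul_self Q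
  rw [conjTranspose_eq_transpose_of_trivial, h1, h2] at h
  by_contra hc
  push Not at hc
  nlinarith

/-- One transport step is invertible when the projections are close. -/
lemma isUnit_step {n L : ℕ} {P Q : Fin L → Matrix (Fin n) (Fin n) ℝ}
    (hPs : ∀ i, (P i)ᵀ = P i) (hPi : ∀ i, P i * P i = P i) (hPsum : ∑ i, P i = 1)
    (hclose : ∀ i, ‖P i - Q i‖ ≤ 1 / (L + 1)) : IsUnit (∑ i, Q i * P i) := by
  have h1 : 1 - ∑ i, (P i - Q i) * P i = ∑ i, Q i * P i := by
    rw [← hPsum, ← Finset.sum_sub_distrib]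
    refine Finset.sum_congr rfl fun i _ => ?_
    rw [sub_mul, hPi]; abel
  rw [← h1]
  apply isUnit_one_sub_of_norm_lt_one
  calc ‖∑ i, (P i - Q i) * P i‖ ≤ ∑ i : Fin L, (1 / ((L : ℝ) + 1)) := by
        refine norm_sum_le_of_le _ fun i _ => ?_
        calc ‖(P i - Q i) * P i‖ ≤ ‖P i - Q i‖ * ‖P i‖ := norm_mul_le _ _
          _ ≤ (1 / ((L : ℝ) + 1)) * 1 := by
            gcongr
            · exact hclose i
            · exact norm_proj_le (hPs i) (hPi i)
          _ = _ := mul_one _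
    _ < 1 := by
      rw [Finset.sum_const, Finset.card_univ, Fintype.card_fin, nsmul_eq_mul, mul_one_div,
        div_lt_one (by positivity)]
      linarith

lemma transport_inv {n L : ℕ} {E : Type*} [NormedAddCommGroup E] [NormedSpace ℝ E]
    [FiniteDimensional ℝ E] (Pi : Fin L → E → Matrix (Fin n) (Fin n) ℝ)
    (hsm : ∀ i, ContDiffOn ℝ (⊤ : ℕ∞) (Pi i) (closedBall 0 2))
    (hs : ∀ i, ∀ x ∈ closedBall (0 : E) 2, (Pi i x)ᵀ = Pi i x)
    (hid : ∀ i, ∀ x ∈ closedBall (0 : E) 2, Pi i x * Pi i x = Pi i x)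
    (horth : ∀ i j, i ≠ j → ∀ x ∈ closedBall (0 : E) 2, Pi i x * Pi j x = 0)
    (hsum : ∀ x ∈ closedBall (0 : E) 2, ∑ i, Pi i x = 1) :
    ∃ V : E → Matrix (Fin n) (Fin n) ℝ, ContDiffOn ℝ (⊤ : ℕ∞) V (ball 0 2) ∧
      ∀ x ∈ ball (0 : E) 2, IsUnit (V x) ∧ ∀ i, Pi i x * V x = V x * Pi i 0 := by
  have hcpt : IsCompact (closedBall (0 : E) 2) := isCompact_closedBall 0 2
  have huc : UniformContinuousOn (fun x => fun i => Pi i x) (closedBall (0 : E) 2) :=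
    hcpt.uniformContinuousOn_of_continuous (continuousOn_pi.2 fun i => (hsm i).continuousOn)
  rw [Metric.uniformContinuousOn_iff] at huc
  obtain ⟨δ, hδ, hclose⟩ := huc (1 / ((L : ℝ) + 1)) (by positivity)
  obtain ⟨N, hN⟩ := exists_nat_gt (2 / δ)
  have hN0 : (0 : ℝ) < N := lt_trans (by positivity) hN
  let t : ℕ → ℝ := fun k => (k : ℝ) / N
  have ht : ∀ k ≤ N, ∀ x ∈ ball (0 : E) 2, t k • x ∈ closedBall (0 : E) 2 := by
    intro k hk x hx
    rw [mem_closedBall_zero_iff, norm_smul]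
    rw [mem_ball_zero_iff] at hx
    have h0 : 0 ≤ t k := by positivity
    have h1 : t k ≤ 1 := by
      rw [div_le_one hN0]; exact_mod_cast hk
    rw [Real.norm_of_nonneg h0]
    nlinarith [norm_nonneg x]
  have key : ∀ k ≤ N, ∃ V : E → Matrix (Fin n) (Fin n) ℝ, ContDiffOn ℝ (⊤ : ℕ∞) V (ball 0 2) ∧
      ∀ x ∈ ball (0 : E) 2, IsUnit (V x) ∧ ∀ i, Pi i (t k • x) * V x = V x * Pi i 0 := by
    intro k
    induction k with
    | zero =>
      intro _
      refine ⟨fun _ => 1, contDiffOn_const, fun x _ => ⟨isUnit_one, fun i => ?_⟩⟩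
      simp [t]
    | succ k ih =>
      intro hk
      obtain ⟨V, hV, hVx⟩ := ih (by omega)
      have hP : ∀ j ≤ N, ∀ i, ContDiffOn ℝ (⊤ : ℕ∞) (fun x => Pi i (t j • x)) (ball 0 2) := by
        intro j hj i
        exact (hsm i).comp (contDiff_const_smul (t j)).contDiffOn (fun x hx => ht j hj x hx)
      refine ⟨fun x => (∑ i, Pi i (t (k + 1) • x) * Pi i (t k • x)) * V x, ?_, ?_⟩
      · exact (ContDiffOn.sum fun i _ => (hP (k + 1) hk i).mul (hP k (by omega) i)).mul hV
      · intro x hx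
        have hk0 := ht k (by omega) x hx
        have hk1 := ht (k + 1) hk x hx
        refine ⟨?_, fun i => ?_⟩
        · refine IsUnit.mul ?_ (hVx x hx).1
          refine isUnit_step (fun i => hs i _ hk0) (fun i => hid i _ hk0) (hsum _ hk0) fun i => ?_
          have hd : dist (t k • x) (t (k + 1) • x) < δ := by
            rw [dist_eq_norm, ← sub_smul, norm_smul]
            have : t k - t (k + 1) = -(1 / N) := by
              simp only [t]; push_cast; field_simp; ring
            rw [this, norm_neg, Real.norm_of_nonneg (by positivity)]
            rw [mem_ball_zero_iff] at hx
            rw [div_lt_iff₀ hδ] at hN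
            rw [one_div, inv_mul_lt_iff₀ hN0]
            linarith
          have := hclose _ hk0 _ hk1 hd
          rw [← dist_eq_norm]
          exact (dist_le_pi_dist (fun i => Pi i (t k • x)) (fun i => Pi i (t (k + 1) • x)) i).trans this.le
        · have h1 : Pi i (t (k + 1) • x) * ∑ j, Pi j (t (k + 1) • x) * Pi j (t k • x)
              = Pi i (t (k + 1) • x) * Pi i (t k • x) := by
            rw [Finset.mul_sum, Finset.sum_eq_single i]
            · rw [← mul_assoc, hid i _ hk1]
            · intro j _ hj
              rw [← mul_assoc, horth i j hj.symm _ hk1, zero_mul]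
            · simp
          have h2 : (∑ j, Pi j (t (k + 1) • x) * Pi j (t k • x)) * Pi i (t k • x)
              = Pi i (t (k + 1) • x) * Pi i (t k • x) := by
            rw [Finset.sum_mul, Finset.sum_eq_single i]
            · rw [mul_assoc, hid i _ hk0]
            · intro j _ hj
              rw [mul_assoc, horth j i hj _ hk0, mul_zero]
            · simp
          simp only
          rw [← mul_assoc, h1, ← h2, mul_assoc, (hVx x hx).2 i, mul_assoc]
  obtain ⟨V, hV, hVx⟩ := key N le_rfl
  refine ⟨V, hV, fun x hx => ⟨(hVx x hx).1, fun i => ?_⟩⟩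
  have := (hVx x hx).2 i
  have hN1 : t N = 1 := div_self hN0.ne'
  rwa [hN1, one_smul] at this

lemma transport {n L : ℕ} {E : Type*} [NormedAddCommGroup E] [NormedSpace ℝ E]
    [FiniteDimensional ℝ E] (Pi : Fin L → E → Matrix (Fin n) (Fin n) ℝ)
    (hsm : ∀ i, ContDiffOn ℝ (⊤ : ℕ∞) (Pi i) (closedBall 0 2))
    (hs : ∀ i, ∀ x ∈ closedBall (0 : E) 2, (Pi i x)ᵀ = Pi i x)
    (hid : ∀ i, ∀ x ∈ closedBall (0 : E) 2, Pi i x * Pi i x = Pi i x)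
    (horth : ∀ i j, i ≠ j → ∀ x ∈ closedBall (0 : E) 2, Pi i x * Pi j x = 0)
    (hsum : ∀ x ∈ closedBall (0 : E) 2, ∑ i, Pi i x = 1) :
    ∃ U : E → Matrix (Fin n) (Fin n) ℝ, ContDiffOn ℝ (⊤ : ℕ∞) U (ball 0 2) ∧
      ∀ x ∈ ball (0 : E) 2, (U x)ᵀ * U x = 1 ∧ ∀ i, Pi i x * U x = U x * Pi i 0 := by
  obtain ⟨V, hV, hVx⟩ := transport_inv Pi hsm hs hid horth hsum
  have hsq : ∀ x ∈ ball (0 : E) 2, ∃ B : Matrix (Fin n) (Fin n) ℝ,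
      Bᵀ = B ∧ QPos B ∧ B * B = (V x)ᵀ * V x := by
    intro x hx
    refine exists_sqrt (by simp [IsSymm]) fun v hv => ?_
    rw [← mulVec_mulVec, dotProduct_mulVec, vecMul_transpose]
    have hne : V x *ᵥ v ≠ 0 := by
      intro h
      apply hv
      have hinj := Matrix.mulVec_injective_iff_isUnit.2 (hVx x hx).1
      exact hinj (by simpa using h)
    have := dotProduct_star_self_pos_iff.2 hne
    simpa using this
  choose! B hBs hBp hBB using hsq
  have hBsm : ContDiffOn ℝ (⊤ : ℕ∞) B (ball 0 2) :=
    contDiffOn_sqrt ((contDiffOn_transpose hV).mul hV) hBp hBB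
  refine ⟨fun x => V x * (B x)⁻¹, hV.mul (contDiffOn_matInv hBsm fun x hx => (hBp x hx).isUnit), ?_⟩
  intro x hx
  have hdet : IsUnit (B x).det := (Matrix.isUnit_iff_isUnit_det _).1 (hBp x hx).isUnit
  have hl : (B x)⁻¹ * B x = 1 := Matrix.nonsing_inv_mul _ hdet
  have hr : B x * (B x)⁻¹ = 1 := Matrix.mul_nonsing_inv _ hdet
  have h0 : (0 : E) ∈ closedBall (0 : E) 2 := by simp
  have hxc := ball_subset_closedBall hx
  refine ⟨?_, fun i => ?_⟩
  · simp only
    rw [transpose_mul, Matrix.transpose_nonsing_inv, hBs x hx]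
    calc (B x)⁻¹ * (V x)ᵀ * (V x * (B x)⁻¹) = (B x)⁻¹ * ((V x)ᵀ * V x) * (B x)⁻¹ := by
          simp only [mul_assoc]
      _ = ((B x)⁻¹ * B x) * (B x * (B x)⁻¹) := by rw [← hBB x hx]; simp only [mul_assoc]
      _ = 1 := by rw [hl, hr, one_mul]
  · have h1 := (hVx x hx).2 i
    have h2 : (V x)ᵀ * Pi i x = Pi i 0 * (V x)ᵀ := by
      have := congrArg transpose h1
      rwa [transpose_mul, transpose_mul, hs i x hxc, hs i 0 h0] at this
    have h3 : B x * B x * Pi i 0 = Pi i 0 * (B x * B x) := by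
      rw [hBB x hx, mul_assoc, ← h1, ← mul_assoc, h2, mul_assoc]
    have h4 : B x * Pi i 0 - Pi i 0 * B x = 0 := by
      apply sylvester (hBp x hx) (hBp x hx)
      rw [mul_sub, sub_mul, ← mul_assoc, h3]
      simp only [mul_assoc]
      abel
    have h5 : B x * Pi i 0 = Pi i 0 * B x := sub_eq_zero.1 h4
    have h6 : (B x)⁻¹ * Pi i 0 = Pi i 0 * (B x)⁻¹ := by
      calc (B x)⁻¹ * Pi i 0 = (B x)⁻¹ * (Pi i 0 * B x) * (B x)⁻¹ := by
            rw [mul_assoc, mul_assoc, hr, mul_one]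
        _ = ((B x)⁻¹ * B x) * Pi i 0 * (B x)⁻¹ := by rw [← h5]; simp only [mul_assoc]
        _ = _ := by rw [hl, one_mul]
    simp only
    rw [← mul_assoc, h1, mul_assoc, mul_assoc, h6]

lemma lam_gap {L : ℕ} {lamStar : Fin L → ℝ} (hlamStar : StrictMono lamStar) {r : ℝ}
    (hr : IsLeast {d : ℝ | ∃ i : Fin L, ∃ h : (i : ℕ) + 1 < L,
      d = lamStar ⟨(i : ℕ) + 1, h⟩ - lamStar i} r) {i j : Fin L} (hij : i < j) :
    r ≤ lamStar j - lamStar i := by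
  have hlt : (i : ℕ) < j := hij
  have h : (i : ℕ) + 1 < L := by have := j.2; omega
  have h1 := hr.2 ⟨i, h, rfl⟩
  have h2 : lamStar ⟨(i : ℕ) + 1, h⟩ ≤ lamStar j := by
    apply hlamStar.monotone
    rw [Fin.le_def]
    exact hlt
  linarith

lemma lam_gap_abs {L : ℕ} {lamStar : Fin L → ℝ} (hlamStar : StrictMono lamStar) {r : ℝ}
    (hr : IsLeast {d : ℝ | ∃ i : Fin L, ∃ h : (i : ℕ) + 1 < L,
      d = lamStar ⟨(i : ℕ) + 1, h⟩ - lamStar i} r) {i j : Fin L} (hij : i ≠ j) :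
    r ≤ |lamStar j - lamStar i| := by
  rcases lt_or_gt_of_ne hij with h | h
  · exact (lam_gap hlamStar hr h).trans (le_abs_self _)
  · rw [abs_sub_comm]
    exact (lam_gap hlamStar hr h).trans (le_abs_self _)

/-- every eigenvalue belongs to exactly one cluster. -/
lemma exists_label {n L : ℕ} {m : Fin L → ℕ} (hsum : ∑ i, m i = n)
    {lamStar : Fin L → ℝ} {ε : ℝ}
    (hgap : ∀ i j, i ≠ j → 4 * ε ≤ |lamStar j - lamStar i|) (d : Fin n → ℝ)
    (hcard : ∀ i, (Finset.univ.filter (fun a : Fin n =>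
          d a ∈ Set.Ioo (lamStar i - ε) (lamStar i + ε))).card = m i) :
    ∃ κ : Fin n → Fin L, (∀ a, |d a - lamStar (κ a)| < ε) ∧
      ∀ i, Fintype.card {a // κ a = i} = m i := by
  have hmem : ∀ a i, d a ∈ Set.Ioo (lamStar i - ε) (lamStar i + ε) ↔ |d a - lamStar i| < ε := by
    intro a i
    rw [abs_sub_lt_iff, Set.mem_Ioo]
    constructor <;> rintro ⟨h1, h2⟩ <;> constructor <;> linarith
  simp only [hmem] at hcard
  have huniq : ∀ a i j, |d a - lamStar i| < ε → |d a - lamStar j| < ε → i = j := by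
    intro a i j hi hj
    by_contra hne
    have h1 := hgap i j hne
    have h2 : |lamStar j - lamStar i| ≤ |d a - lamStar i| + |d a - lamStar j| := by
      have : lamStar j - lamStar i = (d a - lamStar i) - (d a - lamStar j) := by ring
      rw [this]; exact abs_sub _ _
    have := abs_nonneg (d a - lamStar i)
    linarith
  have hU : (Finset.univ.biUnion fun i => Finset.univ.filter (fun a : Fin n => |d a - lamStar i| < ε))
      = Finset.univ := by
    apply Finset.eq_univ_of_card
    rw [Finset.card_biUnion, Finset.sum_congr rfl (fun i _ => hcard i), hsum, Fintype.card_fin]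
    intro i _ j _ hij
    rw [Function.onFun, Finset.disjoint_left]
    intro a ha hb
    simp only [Finset.mem_filter, Finset.mem_univ, true_and] at ha hb
    exact hij (huniq a i j ha hb)
  have hex : ∀ a, ∃ i, |d a - lamStar i| < ε := by
    intro a
    have : a ∈ (Finset.univ.biUnion fun i => Finset.univ.filter (fun a : Fin n => |d a - lamStar i| < ε)) := by
      rw [hU]; exact Finset.mem_univ _
    simpa using this
  choose κ hκ using hex
  refine ⟨κ, hκ, fun i => ?_⟩
  rw [Fintype.card_subtype, ← hcard i]
  congr 1
  ext a
  simp only [Finset.mem_filter, Finset.mem_univ, true_and]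
  exact ⟨fun h => h ▸ hκ a, fun h => huniq a _ _ (hκ a) h⟩

lemma exists_equiv {n L : ℕ} {m : Fin L → ℕ} (κ : Fin n → Fin L)
    (h : ∀ i, Fintype.card {a // κ a = i} = m i) :
    ∃ e : (Σ i : Fin L, Fin (m i)) ≃ Fin n, ∀ i a, κ (e ⟨i, a⟩) = i := by
  let f : ∀ i, Fin (m i) ≃ {a // κ a = i} := fun i =>
    (Fintype.equivFinOfCardEq (h i)).symm
  refine ⟨(Equiv.sigmaCongrRight f).trans (Equiv.sigmaFiberEquiv κ), fun i a => ?_⟩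
  exact (f i a).2

/-- the cluster projection is a smooth function of the matrix. -/
lemma contDiffOn_proj {n L : ℕ} {E : Type*} [NormedAddCommGroup E] [NormedSpace ℝ E] {K : Set E}
    {H V : E → Matrix (Fin n) (Fin n) ℝ} {d : E → Fin n → ℝ} {κ : E → Fin n → Fin L}
    {lamStar : Fin L → ℝ} {ε : ℝ} (hε : 0 < ε)
    (hgap : ∀ i j, i ≠ j → 4 * ε ≤ |lamStar j - lamStar i|)
    (hH : ContDiffOn ℝ (⊤ : ℕ∞) H K) (hV : ∀ x ∈ K, (V x)ᵀ * V x = 1)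
    (hHV : ∀ x ∈ K, H x = dg (V x) (d x)) (hκ : ∀ x ∈ K, ∀ a, |d x a - lamStar (κ x a)| < ε)
    (i : Fin L) :
    ContDiffOn ℝ (⊤ : ℕ∞) (fun x => dg (V x) fun a => if κ x a = i then 1 else 0) K := by
  let q : E → Fin n → ℝ := fun x a => (d x a - lamStar i * 1) * (d x a - lamStar i * 1) - ε ^ 2 * 1
  let Q : E → Matrix (Fin n) (Fin n) ℝ := fun x =>
    (H x - lamStar i • 1) * (H x - lamStar i • 1) - (ε ^ 2) • 1
  have hQq : ∀ x ∈ K, Q x = dg (V x) (q x) := by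
    intro x hx
    simp only [Q, q]
    rw [← dg_one (hV x hx), hHV x hx, dg_smul, dg_sub, dg_mul (hV x hx), dg_smul, dg_sub]
  have hneg : ∀ x ∈ K, ∀ a, κ x a = i → q x a < 0 := by
    intro x hx a ha
    have := hκ x hx a
    rw [ha, abs_lt] at this
    simp only [q]
    nlinarith
  have hpos : ∀ x ∈ K, ∀ a, κ x a ≠ i → 0 < q x a := by
    intro x hx a ha
    have h1 := hκ x hx a
    have h2 := hgap i (κ x a) (Ne.symm ha)
    have h3 : ε < |d x a - lamStar i| := by
      have h4 : |lamStar (κ x a) - lamStar i| ≤ |d x a - lamStar i| + |d x a - lamStar (κ x a)| := by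
        have : lamStar (κ x a) - lamStar i = (d x a - lamStar i) - (d x a - lamStar (κ x a)) := by ring
        rw [this]; exact abs_sub _ _
      linarith
    have h5 : ε ^ 2 < (d x a - lamStar i) ^ 2 := by
      rw [← sq_abs (d x a - lamStar i)]
      nlinarith
    simp only [q]
    nlinarith
  have hne : ∀ x ∈ K, ∀ a, 0 < |q x a| := by
    intro x hx a
    rw [abs_pos]
    by_cases h : κ x a = i
    · exact (hneg x hx a h).ne
    · exact (hpos x hx a h).ne'
  let R : E → Matrix (Fin n) (Fin n) ℝ := fun x => dg (V x) fun a => |q x a|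
  have hRp : ∀ x ∈ K, QPos (R x) := fun x hx => dg_qpos (hV x hx) (hne x hx)
  have hQ : ContDiffOn ℝ (⊤ : ℕ∞) Q K :=
    ((hH.sub contDiffOn_const).mul (hH.sub contDiffOn_const)).sub contDiffOn_const
  have hR : ContDiffOn ℝ (⊤ : ℕ∞) R K := by
    refine contDiffOn_sqrt (hQ.mul hQ) hRp fun x hx => ?_
    rw [hQq x hx, dg_mul (hV x hx), dg_mul (hV x hx)]
    congr 1
    funext a
    exact abs_mul_abs_self _
  have hfin : ContDiffOn ℝ (⊤ : ℕ∞) (fun x => (1 / 2 : ℝ) • (1 - Q x * (R x)⁻¹)) K :=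
    (contDiffOn_const.sub (hQ.mul (contDiffOn_matInv hR fun x hx => (hRp x hx).isUnit))).const_smul _
  refine hfin.congr fun x hx => ?_
  have hdet : IsUnit (R x).det := (Matrix.isUnit_iff_isUnit_det _).1 (hRp x hx).isUnit
  have h1 : Q x = dg (V x) (fun a => 1 - 2 * if κ x a = i then 1 else 0) * R x := by
    rw [hQq x hx, dg_mul (hV x hx)]
    congr 1
    funext a
    by_cases h : κ x a = i
    · simp only [h, if_true]
      rw [abs_of_neg (hneg x hx a h)]; ring
    · simp only [h, if_false]
      rw [abs_of_pos (hpos x hx a h)]; ring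
  rw [h1, mul_assoc, Matrix.mul_nonsing_inv _ hdet, mul_one, ← dg_one (hV x hx), dg_sub, dg_smul]
  congr 1
  funext a
  split_ifs <;> norm_num

lemma block_diag_core
    (n L : ℕ) (hn : 1 ≤ n) (hL : 2 ≤ L)
    (m : Fin L → ℕ) (hm : ∀ i, 0 < m i) (hsum : ∑ i, m i = n)
    (lamStar : Fin L → ℝ) (hlamStar : StrictMono lamStar)
    (hlamStarSum : ∑ i, (m i : ℝ) * lamStar i = 0)
    (r : ℝ)
    (hr : IsLeast {d : ℝ | ∃ i : Fin L, ∃ h : (i : ℕ) + 1 < L,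
      d = lamStar ⟨(i : ℕ) + 1, h⟩ - lamStar i} r)
    (ε : ℝ) (hε : 0 < ε) (hεr : ε ≤ r / 4)
    (H : EuclideanSpace ℝ (Fin n) → Matrix (Fin n) (Fin n) ℝ)
    (hHsmooth : ∀ a b : Fin n, ContDiffOn ℝ (⊤ : ℕ∞) (fun x => H x a b) (ball 0 4))
    (hHsymm : ∀ x ∈ ball (0 : EuclideanSpace ℝ (Fin n)) 4, (H x).IsSymm)
    (hHtrace : ∀ x ∈ ball (0 : EuclideanSpace ℝ (Fin n)) 4, (H x).trace = 0)
    (hcluster : ∀ x ∈ closedBall (0 : EuclideanSpace ℝ (Fin n)) 2,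
      ∀ (hx : (H x).IsHermitian) (i : Fin L),
        (Finset.univ.filter (fun a : Fin n =>
          hx.eigenvalues a ∈ Set.Ioo (lamStar i - ε) (lamStar i + ε))).card = m i) :
    ∃ (lam : Fin L → EuclideanSpace ℝ (Fin n) → ℝ)
      (S : (i : Fin L) → EuclideanSpace ℝ (Fin n) → Matrix (Fin (m i)) (Fin (m i)) ℝ)
      (P : EuclideanSpace ℝ (Fin n) → Matrix (Fin n) (Fin n) ℝ)
      (e : (Σ i : Fin L, Fin (m i)) ≃ Fin n),
      (∀ i, ContDiffOn ℝ (⊤ : ℕ∞) (lam i) (ball 0 2)) ∧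
      (∀ i (a b : Fin (m i)), ContDiffOn ℝ (⊤ : ℕ∞) (fun x => S i x a b) (ball 0 2)) ∧
      (∀ a b : Fin n, ContDiffOn ℝ (⊤ : ℕ∞) (fun x => P x a b) (ball 0 2)) ∧
      ∀ x ∈ ball (0 : EuclideanSpace ℝ (Fin n)) 2,
        ((P x)ᵀ * P x = 1) ∧
        (∀ i, (S i x).IsSymm ∧ (S i x).trace = 0) ∧
        -- (i) block diagonal form
        ((P x * H x * (P x)ᵀ).submatrix e e =
          Matrix.blockDiagonal' (fun i => lam i x • (1 : Matrix (Fin (m i)) (Fin (m i)) ℝ) + S i x)) ∧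
        -- (ii) gaps of the λᵢ
        (∀ i : Fin L, ∀ h : (i : ℕ) + 1 < L, |lam ⟨(i : ℕ) + 1, h⟩ x - lam i x| ≥ r / 2) ∧
        -- (iii) closeness to the λᵢ*
        (∀ i : Fin L, |lam i x - lamStar i| ≤ ε) ∧
        -- (iv) smallness of the Sᵢ
        (∀ i : Fin L, matrixOpNorm (S i x) ≤ 4 * ε) := by
  have hr4 : 4 * ε ≤ r := by linarith
  have hgap : ∀ i j, i ≠ j → 4 * ε ≤ |lamStar j - lamStar i| := fun i j hij =>
    hr4.trans (lam_gap_abs hlamStar hr hij)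
  have hKsub : closedBall (0 : EuclideanSpace ℝ (Fin n)) 2 ⊆ ball 0 4 :=
    closedBall_subset_ball (by norm_num)
  have hdata : ∀ x ∈ closedBall (0 : EuclideanSpace ℝ (Fin n)) 2,
      ∃ (V : Matrix (Fin n) (Fin n) ℝ) (d : Fin n → ℝ) (κ : Fin n → Fin L),
        Vᵀ * V = 1 ∧ H x = dg V d ∧ (∀ a, |d a - lamStar (κ a)| < ε) ∧
        ∀ i, Fintype.card {a // κ a = i} = m i := by
    intro x hx
    have hh : (H x).IsHermitian := by
      rw [IsHermitian, conjTranspose_eq_transpose_of_trivial]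
      exact hHsymm x (hKsub hx)
    obtain ⟨V, hV, hHV⟩ := spectral_dg hh
    obtain ⟨κ, h1, h2⟩ := exists_label hsum hgap hh.eigenvalues (hcluster x hx hh)
    exact ⟨V, hh.eigenvalues, κ, hV, hHV, h1, h2⟩
  haveI : Nonempty (Fin L) := ⟨⟨0, by omega⟩⟩
  choose! V d κ hV hHV hκ hcard using hdata
  have hHs : ContDiffOn ℝ (⊤ : ℕ∞) H (closedBall 0 2) :=
    (contDiffOn_of_entry hHsmooth).mono hKsub
  have h0 : (0 : EuclideanSpace ℝ (Fin n)) ∈ closedBall (0 : EuclideanSpace ℝ (Fin n)) 2 := by simp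
  obtain ⟨e, he⟩ := exists_equiv (κ 0) (hcard 0 h0)
  let Pr : Fin L → EuclideanSpace ℝ (Fin n) → Matrix (Fin n) (Fin n) ℝ :=
    fun i x => dg (V x) fun a => if κ x a = i then 1 else 0
  obtain ⟨U, hUs, hU⟩ := transport Pr
    (fun i => contDiffOn_proj hε hgap hHs hV hHV hκ i)
    (fun i x _ => dg_transpose _)
    (fun i x hx => by
      simp only [Pr]
      rw [dg_mul (hV x hx)]
      congr 1
      funext a
      split_ifs <;> simp)
    (fun i j hij x hx => by
      simp only [Pr]
      rw [dg_mul (hV x hx)]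
      have : (fun a => (if κ x a = i then (1 : ℝ) else 0) * if κ x a = j then 1 else 0) = fun _ => 0 := by
        funext a
        by_cases h : κ x a = i
        · have : κ x a ≠ j := fun h' => hij (h.symm.trans h')
          simp [this]
        · simp [h]
      rw [this]
      simp [dg])
    (fun x hx => by
      simp only [Pr]
      rw [dg_sum, ← dg_one (hV x hx)]
      congr 1
      funext a
      simp)
  let P : EuclideanSpace ℝ (Fin n) → Matrix (Fin n) (Fin n) ℝ := fun x => (U x * V 0)ᵀ
  let G : EuclideanSpace ℝ (Fin n) → Matrix (Fin n) (Fin n) ℝ := fun x => P x * H x * (P x)ᵀ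
  let Blk : (i : Fin L) → EuclideanSpace ℝ (Fin n) → Matrix (Fin (m i)) (Fin (m i)) ℝ :=
    fun i x => (G x).submatrix (fun a => e ⟨i, a⟩) (fun a => e ⟨i, a⟩)
  let lam : Fin L → EuclideanSpace ℝ (Fin n) → ℝ := fun i x => (∑ a, Blk i x a a) / (m i : ℝ)
  have hPs : ContDiffOn ℝ (⊤ : ℕ∞) P (ball 0 2) :=
    contDiffOn_transpose (hUs.mul contDiffOn_const)
  have hGs : ContDiffOn ℝ (⊤ : ℕ∞) G (ball 0 2) :=
    (hPs.mul (hHs.mono ball_subset_closedBall)).mul (contDiffOn_transpose hPs)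
  have hBs : ∀ i a b, ContDiffOn ℝ (⊤ : ℕ∞) (fun x => Blk i x a b) (ball 0 2) := fun i a b =>
    contDiffOn_entry hGs _ _
  have hlams : ∀ i, ContDiffOn ℝ (⊤ : ℕ∞) (lam i) (ball 0 2) := fun i =>
    (ContDiffOn.sum fun a _ => hBs i a a).div_const _
  -- pointwise facts
  have hm0 : ∀ i, (0 : ℝ) < m i := fun i => by exact_mod_cast hm i
  let D : Fin L → Matrix (Fin n) (Fin n) ℝ := fun i => diagonal fun a => if κ 0 a = i then 1 else 0
  have hPP : ∀ x ∈ ball (0 : EuclideanSpace ℝ (Fin n)) 2, P x * (P x)ᵀ = 1 := by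
    intro x hx
    simp only [P]
    rw [transpose_transpose, transpose_mul]
    calc (V 0)ᵀ * (U x)ᵀ * (U x * V 0) = (V 0)ᵀ * ((U x)ᵀ * U x) * V 0 := by simp only [mul_assoc]
      _ = 1 := by rw [(hU x hx).1, mul_one, hV 0 h0]
  have hPP' : ∀ x ∈ ball (0 : EuclideanSpace ℝ (Fin n)) 2, (P x)ᵀ * P x = 1 := fun x hx =>
    mul_eq_one_comm.1 (hPP x hx)
  have hPD : ∀ x ∈ ball (0 : EuclideanSpace ℝ (Fin n)) 2, ∀ i, (P x)ᵀ * D i = Pr i x * (P x)ᵀ := by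
    intro x hx i
    simp only [P]
    rw [transpose_transpose, ← mul_assoc, (hU x hx).2 i]
    simp only [Pr, dg, D]
    simp only [mul_assoc, hV 0 h0, mul_one]
  have hDP : ∀ x ∈ ball (0 : EuclideanSpace ℝ (Fin n)) 2, ∀ i, D i * P x = P x * Pr i x := by
    intro x hx i
    have := congrArg transpose (hPD x hx i)
    rw [transpose_mul, transpose_mul, transpose_transpose] at this
    simpa [D, Pr, dg_transpose] using this
  have hcomm : ∀ x ∈ ball (0 : EuclideanSpace ℝ (Fin n)) 2, ∀ i, H x * Pr i x = Pr i x * H x := by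
    intro x hx i
    have hx' := ball_subset_closedBall hx
    simp only [Pr]
    rw [hHV x hx', dg_mul (hV x hx'), dg_mul (hV x hx')]
    congr 1
    funext a
    exact mul_comm _ _
  have hGD : ∀ x ∈ ball (0 : EuclideanSpace ℝ (Fin n)) 2, ∀ i, G x * D i = D i * G x := by
    intro x hx i
    simp only [G]
    rw [mul_assoc, hPD x hx i, ← mul_assoc, mul_assoc (P x), hcomm x hx i, ← mul_assoc, ← hDP x hx i]
    simp only [mul_assoc]
  have hoff : ∀ x ∈ ball (0 : EuclideanSpace ℝ (Fin n)) 2, ∀ i j, i ≠ j → ∀ a b,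
      G x (e ⟨i, a⟩) (e ⟨j, b⟩) = 0 := by
    intro x hx i j hij a b
    have := congrFun (congrFun (hGD x hx j) (e ⟨i, a⟩)) (e ⟨j, b⟩)
    simp only [D, mul_diagonal, diagonal_mul, he] at this
    simpa [hij] using this
  have hnorm : ∀ x ∈ ball (0 : EuclideanSpace ℝ (Fin n)) 2, ∀ i,
      ‖Blk i x - lamStar i • (1 : Matrix (Fin (m i)) (Fin (m i)) ℝ)‖ ≤ ε := by
    intro x hx i
    have hx' := ball_subset_closedBall hx
    have h1 : ‖(H x - lamStar i • 1) * Pr i x‖ ≤ ε := by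
      rw [← dg_one (hV x hx'), hHV x hx', dg_smul, dg_sub, dg_mul (hV x hx')]
      apply norm_dg_le (hV x hx') hε.le
      intro a
      by_cases h : κ x a = i
      · have := hκ x hx' a
        rw [h] at this
        simpa [h] using this.le
      · simpa [h] using hε.le
    have h2 := norm_compress (P x)ᵀ (by rw [transpose_transpose, hPP x hx])
      ((H x - lamStar i • 1) * Pr i x)
    have h3 : ((P x)ᵀ)ᵀ * ((H x - lamStar i • 1) * Pr i x) * (P x)ᵀ = (G x - lamStar i • 1) * D i := by
      rw [transpose_transpose, mul_assoc, mul_assoc (H x - _), ← hPD x hx i]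
      simp only [G]
      rw [← mul_assoc, ← mul_assoc, mul_sub, sub_mul, Matrix.mul_smul, mul_one, Matrix.smul_mul, hPP x hx]
    rw [h3] at h2
    let J : Matrix (Fin n) (Fin (m i)) ℝ := (1 : Matrix (Fin n) (Fin n) ℝ).submatrix id (fun a => e ⟨i, a⟩)
    have hJX : ∀ X : Matrix (Fin n) (Fin n) ℝ, Jᵀ * X * J =
        X.submatrix (fun a => e ⟨i, a⟩) (fun a => e ⟨i, a⟩) := by
      intro X
      ext a b
      simp [J, Matrix.mul_apply, Matrix.one_apply]
    have hinj : Function.Injective fun a : Fin (m i) => e ⟨i, a⟩ := fun a b h => by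
      simpa using h
    have hJ : Jᵀ * J = 1 := by
      have := hJX 1
      rwa [Matrix.mul_one, submatrix_one _ hinj] at this
    have h4 := norm_compress J hJ ((G x - lamStar i • 1) * D i)
    rw [hJX] at h4
    have h5 : ((G x - lamStar i • 1) * D i).submatrix (fun a => e ⟨i, a⟩) (fun a => e ⟨i, a⟩)
        = Blk i x - lamStar i • (1 : Matrix (Fin (m i)) (Fin (m i)) ℝ) := by
      ext a b
      simp [D, Blk, he, Matrix.one_apply]
    rw [h5] at h4
    exact h4.trans (h2.trans h1)
  have hlam : ∀ x ∈ ball (0 : EuclideanSpace ℝ (Fin n)) 2, ∀ i, |lam i x - lamStar i| ≤ ε := by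
    intro x hx i
    have h1 : lam i x - lamStar i = (∑ a, (Blk i x - lamStar i • (1 : Matrix (Fin (m i)) (Fin (m i)) ℝ)) a a) / m i := by
      have := (hm0 i).ne'
      simp only [lam, Matrix.sub_apply, Matrix.smul_apply, Matrix.one_apply_eq, Finset.sum_sub_distrib]
      simp
      field_simp
    rw [h1, abs_div, abs_of_pos (hm0 i), div_le_iff₀ (hm0 i)]
    calc _ ≤ ∑ a : Fin (m i), |(Blk i x - lamStar i • (1 : Matrix (Fin (m i)) (Fin (m i)) ℝ)) a a| :=
          Finset.abs_sum_le_sum_abs _ _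
      _ ≤ ∑ a : Fin (m i), ε := Finset.sum_le_sum fun a _ => (abs_entry_le _ a).trans (hnorm x hx i)
      _ = ε * m i := by simp [mul_comm]
  refine ⟨lam, fun i x => Blk i x - lam i x • 1, P, e, hlams, ?_, fun a b => contDiffOn_entry hPs a b, ?_⟩
  · intro i a b
    exact (hBs i a b).sub ((hlams i).mul contDiffOn_const)
  intro x hx
  have hx' := ball_subset_closedBall hx
  refine ⟨hPP' x hx, fun i => ⟨?_, ?_⟩, ?_, ?_, hlam x hx, ?_⟩
  · have hG : (G x)ᵀ = G x := by
      simp only [G]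
      rw [transpose_mul, transpose_mul, transpose_transpose, (hHsymm x (hKsub hx')).eq, mul_assoc]
    have hB : (Blk i x)ᵀ = Blk i x := by
      simp only [Blk]
      rw [transpose_submatrix, hG]
    simp only [IsSymm]
    rw [transpose_sub, hB, transpose_smul, transpose_one]
  · rw [trace_sub, trace_smul, trace_one, Fintype.card_fin]
    have := (hm0 i).ne'
    simp only [lam, smul_eq_mul, Matrix.trace, Matrix.diag_apply]
    field_simp
    ring
  · ext ⟨i, a⟩ ⟨j, b⟩
    rw [submatrix_apply]
    by_cases hij : i = j
    · subst hij
      rw [blockDiagonal'_apply_eq]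
      simp [Blk, G]
    · rw [blockDiagonal'_apply_ne _ _ _ hij]
      exact hoff x hx i j hij a b
  · intro i h
    have h1 := hlam x hx i
    have h2 := hlam x hx ⟨(i : ℕ) + 1, h⟩
    have h3 := hr.2 ⟨i, h, rfl⟩
    rw [abs_le] at h1 h2
    refine le_trans ?_ (le_abs_self _)
    linarith
  · intro i
    change ‖Blk i x - lam i x • (1 : Matrix (Fin (m i)) (Fin (m i)) ℝ)‖ ≤ 4 * ε
    have h1 : Blk i x - lam i x • (1 : Matrix (Fin (m i)) (Fin (m i)) ℝ)
        = (Blk i x - lamStar i • (1 : Matrix (Fin (m i)) (Fin (m i)) ℝ))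
          - (lam i x - lamStar i) • (1 : Matrix (Fin (m i)) (Fin (m i)) ℝ) := by
      rw [sub_smul]; abel
    rw [h1]
    have h2 : ‖(1 : Matrix (Fin (m i)) (Fin (m i)) ℝ)‖ ≤ 1 := norm_le_one_of_iso 1 (by simp)
    calc _ ≤ ‖Blk i x - lamStar i • (1 : Matrix (Fin (m i)) (Fin (m i)) ℝ)‖
          + ‖(lam i x - lamStar i) • (1 : Matrix (Fin (m i)) (Fin (m i)) ℝ)‖ := norm_sub_le _ _
      _ ≤ ε + ε * 1 := by
        gcongr
        · exact hnorm x hx i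
        · rw [norm_smul]
          gcongr
          exact hlam x hx i
      _ ≤ 4 * ε := by linarith

end helpers

/-- block diagonalization of clustered symmetric matrix families.
Eigenvalues are counted with multiplicity using `Matrix.IsHermitian.eigenvalues`. -/
theorem smooth_block_diagonalization
    (n L : ℕ) (hn : 1 ≤ n) (hL : 2 ≤ L)
    (m : Fin L → ℕ) (hm : ∀ i, 0 < m i) (hsum : ∑ i, m i = n)
    (lamStar : Fin L → ℝ) (hlamStar : StrictMono lamStar)
    (hlamStarSum : ∑ i, (m i : ℝ) * lamStar i = 0)
    (r : ℝ)
    (hr : IsLeast {d : ℝ | ∃ i : Fin L, ∃ h : (i : ℕ) + 1 < L,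
      d = lamStar ⟨(i : ℕ) + 1, h⟩ - lamStar i} r)
    (ε : ℝ) (hε : 0 < ε) (hεr : ε ≤ r / 4)
    (H : EuclideanSpace ℝ (Fin n) → Matrix (Fin n) (Fin n) ℝ)
    (hHsmooth : ∀ a b : Fin n, ContDiffOn ℝ (⊤ : ℕ∞) (fun x => H x a b) (ball 0 4))
    (hHsymm : ∀ x ∈ ball (0 : EuclideanSpace ℝ (Fin n)) 4, (H x).IsSymm)
    (hHtrace : ∀ x ∈ ball (0 : EuclideanSpace ℝ (Fin n)) 4, (H x).trace = 0)
    (hcluster : ∀ x ∈ closedBall (0 : EuclideanSpace ℝ (Fin n)) 2,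
      ∀ (hx : (H x).IsHermitian) (i : Fin L),
        (Finset.univ.filter (fun a : Fin n =>
          hx.eigenvalues a ∈ Set.Ioo (lamStar i - ε) (lamStar i + ε))).card = m i) :
    ∃ (lam : Fin L → EuclideanSpace ℝ (Fin n) → ℝ)
      (S : (i : Fin L) → EuclideanSpace ℝ (Fin n) → Matrix (Fin (m i)) (Fin (m i)) ℝ)
      (P : EuclideanSpace ℝ (Fin n) → Matrix (Fin n) (Fin n) ℝ)
      (e : (Σ i : Fin L, Fin (m i)) ≃ Fin n),
      (∀ i, ContDiffOn ℝ (⊤ : ℕ∞) (lam i) (ball 0 2)) ∧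
      (∀ i (a b : Fin (m i)), ContDiffOn ℝ (⊤ : ℕ∞) (fun x => S i x a b) (ball 0 2)) ∧
      (∀ a b : Fin n, ContDiffOn ℝ (⊤ : ℕ∞) (fun x => P x a b) (ball 0 2)) ∧
      ∀ x ∈ ball (0 : EuclideanSpace ℝ (Fin n)) 2,
        ((P x)ᵀ * P x = 1) ∧
        (∀ i, (S i x).IsSymm ∧ (S i x).trace = 0) ∧
        -- (i) block diagonal form
        ((P x * H x * (P x)ᵀ).submatrix e e =
          Matrix.blockDiagonal' (fun i => lam i x • (1 : Matrix (Fin (m i)) (Fin (m i)) ℝ) + S i x)) ∧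
        -- (ii) gaps of the λᵢ
        (∀ i : Fin L, ∀ h : (i : ℕ) + 1 < L, |lam ⟨(i : ℕ) + 1, h⟩ x - lam i x| ≥ r / 2) ∧
        -- (iii) closeness to the λᵢ*
        (∀ i : Fin L, |lam i x - lamStar i| ≤ ε) ∧
        -- (iv) smallness of the Sᵢ
        (∀ i : Fin L, matrixOpNorm (S i x) ≤ 4 * ε) := by
  exact block_diag_core n L hn hL m hm hsum lamStar hlamStar hlamStarSum r hr ε hε hεr H hHsmooth
    hHsymm hHtrace hcluster
end

section
/- Let 𝔪 ≤ 𝔪̃ be eigenvalue multiplicity vectors for n, let D_λ ∈ F(𝔪) be a diagonal matrix with nondecreasing diagonal entries, and let V ⊆ Sym₀(n) be a linear subspace with τ(D_λ) + V = Sym₀(n). Then there exists ε > 0 such that for every S ∈ F(𝔪̃) with ‖S − D_λ‖ < ε one has τ(S) + V = Sym₀(n). -/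
open Matrix

/-- `Sym₀(n)`: symmetric traceless real `n×n` matrices. -/
def Sym0 (n : ℕ) : Set (Matrix (Fin n) (Fin n) ℝ) := {X | X.IsSymm ∧ X.trace = 0}

/-- The eigenspace of a matrix `S` for the value `μ`. -/
noncomputable def eigSp {n : ℕ} (S : Matrix (Fin n) (Fin n) ℝ) (μ : ℝ) :
    Submodule ℝ (Fin n → ℝ) :=
  Module.End.eigenspace (Matrix.toLin' S) μ

/-- `ν(S)`: symmetric traceless matrices mapping each eigenspace of `S` into itself,
with trace-zero restriction to each eigenspace of `S`. -/
noncomputable def nuSpace {n : ℕ} (S : Matrix (Fin n) (Fin n) ℝ) :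
    Set (Matrix (Fin n) (Fin n) ℝ) :=
  {X | X ∈ Sym0 n ∧ ∀ μ : ℝ,
    ∃ h : ∀ v ∈ eigSp S μ, (Matrix.toLin' X) v ∈ eigSp S μ,
      LinearMap.trace ℝ ↥(eigSp S μ) ((Matrix.toLin' X).restrict h) = 0}

/-- `τ(S)`: the orthogonal complement of `ν(S)` in `Sym₀(n)` with respect to
`⟨S₁,S₂⟩ = tr(S₁·S₂)`. -/
noncomputable def tauSpace {n : ℕ} (S : Matrix (Fin n) (Fin n) ℝ) :
    Set (Matrix (Fin n) (Fin n) ℝ) :=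
  {X | X ∈ Sym0 n ∧ ∀ Y ∈ nuSpace S, (X * Y).trace = 0}

/-- `S` has multiplicity type given by the monotone surjective map `π : Fin n → Fin L`:
`S` is orthogonally diagonalizable with nondecreasing eigenvalues `λ₁ ≤ ⋯ ≤ λ_n` such that
`λ_a = λ_b` iff `π a = π b`. -/
def MultType {n L : ℕ} (π : Fin n → Fin L) (S : Matrix (Fin n) (Fin n) ℝ) : Prop :=
  ∃ lam : Fin n → ℝ, Monotone lam ∧ (∀ a b, lam a = lam b ↔ π a = π b) ∧
    ∃ P : Matrix (Fin n) (Fin n) ℝ, Pᵀ * P = 1 ∧ S = P * Matrix.diagonal lam * Pᵀ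

/-- The face `F(𝔪) ⊆ Sym₀(n)`: traceless matrices of multiplicity type `𝔪`. -/
def Face {n L : ℕ} (π : Fin n → Fin L) : Set (Matrix (Fin n) (Fin n) ℝ) :=
  {S | S.trace = 0 ∧ MultType π S}

/-- The multiplicity `m_i`, i.e. the cardinality of the fiber `π⁻¹(i)`. -/
def multCard {n L : ℕ} (π : Fin n → Fin L) (i : Fin L) : ℕ :=
  (Finset.univ.filter fun a => π a = i).card

/-- `𝔪 ≤ 𝔪̃` : there is a surjective nondecreasing `J` with `m_i = Σ_{j ∈ J⁻¹(i)} m̃_j`.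
Here `π` encodes `𝔪` and `π'` encodes `𝔪̃`. -/
def MultLE {n L L' : ℕ} (π : Fin n → Fin L) (π' : Fin n → Fin L') : Prop :=
  ∃ J : Fin L' → Fin L, Monotone J ∧ Function.Surjective J ∧
    ∀ i : Fin L, multCard π i = ∑ j ∈ Finset.univ.filter (fun j => J j = i), multCard π' j

/-- The norm induced by the inner product `⟨S₁,S₂⟩ = tr(S₁·S₂)` (Frobenius norm). -/
noncomputable def frobNorm {n : ℕ} (X : Matrix (Fin n) (Fin n) ℝ) : ℝ :=
  Real.sqrt ((X * Xᵀ).trace)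

section TransversalityHelpers

/-- `S` is orthogonally diagonalizable. -/
def OrthDiag {n : ℕ} (S : Matrix (Fin n) (Fin n) ℝ) : Prop :=
  ∃ (mu : Fin n → ℝ) (P : Matrix (Fin n) (Fin n) ℝ),
    Pᵀ * P = 1 ∧ S = P * Matrix.diagonal mu * Pᵀ

/-- Algebraic version of the normal space. -/
def algNu {n : ℕ} (S : Matrix (Fin n) (Fin n) ℝ) :
    Submodule ℝ (Matrix (Fin n) (Fin n) ℝ) where
  carrier := {X | (X.IsSymm ∧ X.trace = 0) ∧ X * S = S * X ∧
    ∀ p : Polynomial ℝ, (X * Polynomial.aeval S p).trace = 0}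
  zero_mem' := by simp
  add_mem' := by
    rintro X Y ⟨⟨h1, h2⟩, h3, h4⟩ ⟨⟨k1, k2⟩, k3, k4⟩
    refine ⟨⟨h1.add k1, by simp [h2, k2]⟩, by rw [add_mul, mul_add, h3, k3], fun p => ?_⟩
    rw [add_mul, Matrix.trace_add, h4, k4, add_zero]
  smul_mem' := by
    rintro c X ⟨⟨h1, h2⟩, h3, h4⟩
    refine ⟨⟨h1.smul c, by simp [h2]⟩, by rw [smul_mul_assoc, mul_smul_comm, h3], fun p => ?_⟩
    rw [smul_mul_assoc, Matrix.trace_smul, h4, smul_zero]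

lemma OrthDiag.iSup_eq_top {n : ℕ} {S : Matrix (Fin n) (Fin n) ℝ} (hS : OrthDiag S) :
    ⨆ μ : ℝ, eigSp S μ = ⊤ := by
  obtain ⟨mu, P, hP, rfl⟩ := hS
  have hP' : P * Pᵀ = 1 := mul_eq_one_comm.mp hP
  rw [eq_top_iff]
  intro v _
  have hv : v = ∑ i, (Pᵀ *ᵥ v) i • (P *ᵥ Pi.single i 1) := by
    have h1 : v = P *ᵥ (Pᵀ *ᵥ v) := by rw [Matrix.mulVec_mulVec, hP', Matrix.one_mulVec]
    conv_lhs => rw [h1]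
    generalize Pᵀ *ᵥ v = w
    ext k
    simp [Matrix.mulVec, dotProduct, mul_comm]
  rw [hv]
  refine Submodule.sum_mem _ fun i _ => Submodule.smul_mem _ _ ?_
  refine Submodule.mem_iSup_of_mem (mu i) ?_
  rw [eigSp, Module.End.mem_eigenspace_iff, Matrix.toLin'_apply, Matrix.mulVec_mulVec,
    Matrix.mul_assoc, hP, Matrix.mul_one, ← Matrix.mulVec_mulVec]
  have : Matrix.diagonal mu *ᵥ Pi.single i 1 = mu i • (Pi.single i 1 : Fin n → ℝ) := by
    ext k
    by_cases h : k = i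
    · subst h; simp [Matrix.mulVec_diagonal]
    · simp [Matrix.mulVec_diagonal, h]
  rw [this, Matrix.mulVec_smul]

lemma toLin_aeval {n : ℕ} (S : Matrix (Fin n) (Fin n) ℝ) (p : Polynomial ℝ) :
    Matrix.toLin' (Polynomial.aeval S p) = Polynomial.aeval (Matrix.toLin' S) p := by
  have := Polynomial.aeval_algHom_apply
    (Matrix.toLinAlgEquiv' : Matrix (Fin n) (Fin n) ℝ ≃ₐ[ℝ] _).toAlgHom S p
  exact this.symm

lemma finite_eig {n : ℕ} (S : Matrix (Fin n) (Fin n) ℝ) : {μ | eigSp S μ ≠ ⊥}.Finite :=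
  WellFoundedGT.finite_ne_bot_of_iSupIndep (Module.End.eigenspaces_iSupIndep (Matrix.toLin' S))

lemma aeval_eig {n : ℕ} (S : Matrix (Fin n) (Fin n) ℝ) (p : Polynomial ℝ) (μ : ℝ)
    (v : Fin n → ℝ) (hv : v ∈ eigSp S μ) :
    Matrix.toLin' (Polynomial.aeval S p) v = p.eval μ • v := by
  rw [toLin_aeval]
  by_cases h0 : v = 0
  · simp [h0]
  · exact Module.End.aeval_apply_of_hasEigenvector ⟨hv, h0⟩

lemma trace_formula {n : ℕ} {S : Matrix (Fin n) (Fin n) ℝ} (hS : OrthDiag S)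
    (X : Matrix (Fin n) (Fin n) ℝ)
    (h : ∀ μ, ∀ v ∈ eigSp S μ, (Matrix.toLin' X) v ∈ eigSp S μ) (p : Polynomial ℝ) :
    (X * Polynomial.aeval S p).trace = ∑ μ ∈ (finite_eig S).toFinset,
      p.eval μ * LinearMap.trace ℝ ↥(eigSp S μ) ((Matrix.toLin' X).restrict (h μ)) := by
  have hint : DirectSum.IsInternal (eigSp S) :=
    DirectSum.isInternal_submodule_of_iSupIndep_of_iSup_eq_top
      (Module.End.eigenspaces_iSupIndep (Matrix.toLin' S)) hS.iSup_eq_top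
  have key : ∀ μ, ∀ v ∈ eigSp S μ,
      Matrix.toLin' (X * Polynomial.aeval S p) v = p.eval μ • Matrix.toLin' X v := by
    intro μ v hv
    rw [Matrix.toLin'_mul, LinearMap.comp_apply, aeval_eig S p μ v hv, map_smul]
  have hmaps : ∀ μ, Set.MapsTo (Matrix.toLin' (X * Polynomial.aeval S p))
      (eigSp S μ) (eigSp S μ) := by
    intro μ v hv
    rw [key μ v hv]
    exact Submodule.smul_mem _ _ (h μ v hv)
  rw [← Matrix.trace_toLin'_eq, LinearMap.trace_eq_sum_trace_restrict' hint (finite_eig S) hmaps]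
  refine Finset.sum_congr rfl fun μ _ => ?_
  refine Eq.trans ?_ (map_smul (LinearMap.trace ℝ ↥(eigSp S μ)) (p.eval μ)
    ((Matrix.toLin' X).restrict (h μ)))
  congr 1
  ext v : 2
  exact key μ v v.2

lemma nu_eq {n : ℕ} {S : Matrix (Fin n) (Fin n) ℝ} (hS : OrthDiag S) :
    nuSpace S = (algNu S : Set _) := by
  ext X
  constructor
  · rintro ⟨h0, h⟩
    choose h1 h2 using h
    refine ⟨h0, ?_, fun p => ?_⟩
    · apply Matrix.toLin'.injective
      apply LinearMap.ext
      intro v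
      have hv : v ∈ ⨆ μ : ℝ, eigSp S μ := by rw [hS.iSup_eq_top]; trivial
      induction hv using Submodule.iSup_induction' with
      | mem μ v hv =>
        have a := h1 μ v hv
        rw [eigSp, Module.End.mem_eigenspace_iff] at hv a
        rw [Matrix.toLin'_mul, Matrix.toLin'_mul, LinearMap.comp_apply, LinearMap.comp_apply,
          hv, a, map_smul]
      | zero => simp
      | add x y _ _ hx hy => rw [map_add, map_add, hx, hy]
    · rw [trace_formula hS X h1 p]
      exact Finset.sum_eq_zero fun μ _ => by rw [h2, mul_zero]
  · rintro ⟨h0, hc, hp⟩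
    have h1 : ∀ μ, ∀ v ∈ eigSp S μ, (Matrix.toLin' X) v ∈ eigSp S μ := by
      intro μ v hv
      rw [eigSp, Module.End.mem_eigenspace_iff] at hv ⊢
      rw [← LinearMap.comp_apply, ← Matrix.toLin'_mul, ← hc, Matrix.toLin'_mul,
        LinearMap.comp_apply, hv, map_smul]
    refine ⟨h0, fun μ => ⟨h1 μ, ?_⟩⟩
    by_cases hμ : eigSp S μ = ⊥
    · have : (Matrix.toLin' X).restrict (h1 μ) = 0 := by
        ext v : 2
        have hv : (v : Fin n → ℝ) = 0 := (Submodule.eq_bot_iff _).mp hμ v v.2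
        have hv' : v = 0 := Subtype.ext hv
        rw [hv', map_zero, map_zero]
      rw [this, map_zero]
    · have hmem : μ ∈ (finite_eig S).toFinset := by simpa using hμ
      have hf := trace_formula hS X h1 (Lagrange.basis (finite_eig S).toFinset id μ)
      rw [hp, Finset.sum_eq_single_of_mem μ hmem] at hf
      · have := Lagrange.eval_basis_self (v := (id : ℝ → ℝ))
          (Set.injOn_id ((finite_eig S).toFinset : Set ℝ)) hmem
        simp only [id] at this
        have h' : Polynomial.eval μ (Lagrange.basis (finite_eig S).toFinset id μ) = 1 := this
        rw [h', one_mul] at hf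
        exact hf.symm
      · intro b hb hne
        have := Lagrange.eval_basis_of_ne (v := (id : ℝ → ℝ)) hne.symm hb
        have h' : Polynomial.eval b (Lagrange.basis (finite_eig S).toFinset id μ) = 0 := this
        rw [h', zero_mul]

lemma functional_eq_trace {n : ℕ} (f : Matrix (Fin n) (Fin n) ℝ →ₗ[ℝ] ℝ) :
    ∃ A : Matrix (Fin n) (Fin n) ℝ, ∀ X, f X = (A * X).trace := by
  refine ⟨Matrix.of fun i j => f (Matrix.single j i 1), fun X => ?_⟩
  conv_lhs => rw [Matrix.matrix_eq_sum_single X]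
  simp only [map_sum, Matrix.trace, Matrix.diag, Matrix.mul_apply, Matrix.of_apply]
  rw [Finset.sum_comm]
  refine Finset.sum_congr rfl fun i _ => Finset.sum_congr rfl fun j _ => ?_
  have : Matrix.single j i (X j i) = X j i • Matrix.single j i (1 : ℝ) := by
    simp [Matrix.smul_single]
  rw [this, map_smul, smul_eq_mul, mul_comm]

lemma separate {n : ℕ} (W : Submodule ℝ (Matrix (Fin n) (Fin n) ℝ))
    (hW : ∀ w ∈ W, w ∈ Sym0 n) (A : Matrix (Fin n) (Fin n) ℝ) (hA : A ∈ Sym0 n) (hAW : A ∉ W) :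
    ∃ B ∈ Sym0 n, (B * A).trace ≠ 0 ∧ ∀ w ∈ W, (B * w).trace = 0 := by
  obtain ⟨f, hfA, hfW⟩ := Submodule.exists_le_ker_of_notMem hAW
  obtain ⟨C, hC⟩ := functional_eq_trace f
  let B : Matrix (Fin n) (Fin n) ℝ :=
    (1 / 2 : ℝ) • (C + Cᵀ) - (C.trace / n) • (1 : Matrix (Fin n) (Fin n) ℝ)
  have hB : ∀ X ∈ Sym0 n, (B * X).trace = f X := by
    rintro X ⟨hs, ht⟩
    have h1 : (Cᵀ * X).trace = (C * X).trace := by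
      rw [← Matrix.trace_transpose, Matrix.transpose_mul, Matrix.transpose_transpose, hs.eq,
        Matrix.trace_mul_comm]
    rw [hC]
    simp only [B, sub_mul, smul_mul_assoc, add_mul, Matrix.trace_sub, Matrix.trace_smul,
      Matrix.trace_add, h1, one_mul, ht, smul_eq_mul]
    ring
  refine ⟨B, ⟨?_, ?_⟩, by rwa [hB A hA], fun w hw => ?_⟩
  · simp only [B, Matrix.IsSymm, Matrix.transpose_sub, Matrix.transpose_smul,
      Matrix.transpose_add, Matrix.transpose_transpose, Matrix.transpose_one, add_comm]
  · simp only [B, Matrix.trace_sub, Matrix.trace_smul, Matrix.trace_add, Matrix.trace_transpose,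
      Matrix.trace_one, Fintype.card_fin, smul_eq_mul]
    rcases Nat.eq_zero_or_pos n with rfl | hn
    · simp [Matrix.trace]
    · have : (n : ℝ) ≠ 0 := by positivity
      field_simp
      ring
  · rw [hB w (hW w hw)]
    exact hfW hw

/-- `τ(S)` as a submodule. -/
def tauSub {n : ℕ} (S : Matrix (Fin n) (Fin n) ℝ) :
    Submodule ℝ (Matrix (Fin n) (Fin n) ℝ) where
  carrier := tauSpace S
  zero_mem' := ⟨⟨by simp, by simp⟩, by simp⟩
  add_mem' := by
    rintro X Y ⟨⟨h1, h2⟩, h3⟩ ⟨⟨k1, k2⟩, k3⟩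
    refine ⟨⟨h1.add k1, by simp [h2, k2]⟩, fun Z hZ => ?_⟩
    rw [add_mul, Matrix.trace_add, h3 Z hZ, k3 Z hZ, add_zero]
  smul_mem' := by
    rintro c X ⟨⟨h1, h2⟩, h3⟩
    refine ⟨⟨h1.smul c, by simp [h2]⟩, fun Z hZ => ?_⟩
    rw [smul_mul_assoc, Matrix.trace_smul, h3 Z hZ, smul_zero]

lemma exists_normal {n : ℕ} {S : Matrix (Fin n) (Fin n) ℝ} (hS : OrthDiag S)
    (V : Submodule ℝ (Matrix (Fin n) (Fin n) ℝ)) (hV : (V : Set _) ⊆ Sym0 n)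
    (hnot : ¬ ∀ X ∈ Sym0 n, ∃ Y ∈ tauSpace S, ∃ Z ∈ (V : Set _), X = Y + Z) :
    ∃ B ∈ algNu S, B ≠ 0 ∧ ∀ Z ∈ V, (B * Z).trace = 0 := by
  push Not at hnot
  obtain ⟨X, hX, hne⟩ := hnot
  have hXW : X ∉ tauSub S ⊔ V := by
    intro h
    obtain ⟨Y, hY, Z, hZ, h⟩ := Submodule.mem_sup.mp h
    exact hne Y hY Z hZ h.symm
  obtain ⟨B, hB, hBX, hBW⟩ := separate (tauSub S ⊔ V) (by
    intro w hw
    obtain ⟨Y, hY, Z, hZ, rfl⟩ := Submodule.mem_sup.mp hw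
    have h1 : Y ∈ Sym0 n := hY.1
    have h2 := hV hZ
    exact ⟨h1.1.add h2.1, by rw [Matrix.trace_add, h1.2, h2.2, add_zero]⟩) X hX hXW
  refine ⟨B, ?_, ?_, fun Z hZ => hBW Z (Submodule.mem_sup_right hZ)⟩
  · by_contra hBn
    obtain ⟨T, hT, hTB, hTn⟩ := separate (algNu S) (fun w hw => hw.1) B hB hBn
    have hTt : T ∈ tauSub S := by
      refine ⟨hT, fun Y hY => hTn Y ?_⟩
      rw [nu_eq hS] at hY
      exact hY
    apply hTB
    rw [Matrix.trace_mul_comm]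
    exact hBW T (Submodule.mem_sup_left hTt)
  · rintro rfl
    simp at hBX

attribute [local instance] Matrix.frobeniusNormedAddCommGroup Matrix.frobeniusNormedSpace

lemma frobNorm_eq {n : ℕ} (X : Matrix (Fin n) (Fin n) ℝ) : frobNorm X = ‖X‖ := by
  rw [Matrix.frobenius_norm_def, frobNorm, Real.sqrt_eq_rpow]
  simp [Matrix.trace, Matrix.mul_apply, sq]

lemma persists_aux (n : ℕ) (D : Matrix (Fin n) (Fin n) ℝ) (hD : OrthDiag D)
    (V : Submodule ℝ (Matrix (Fin n) (Fin n) ℝ)) (hV : (V : Set _) ⊆ Sym0 n)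
    (htrans : ∀ X ∈ Sym0 n, ∃ Y ∈ tauSpace D, ∃ Z ∈ (V : Set _), X = Y + Z) :
    ∃ ε > (0 : ℝ), ∀ S, OrthDiag S → frobNorm (S - D) < ε →
      ∀ X ∈ Sym0 n, ∃ Y ∈ tauSpace S, ∃ Z ∈ (V : Set _), X = Y + Z := by
  by_contra hcon
  have hex : ∀ k : ℕ, ∃ S B : Matrix (Fin n) (Fin n) ℝ, ‖S - D‖ < 1 / ((k : ℝ) + 1) ∧
      B ∈ algNu S ∧ ‖B‖ = 1 ∧ ∀ Z ∈ V, (B * Z).trace = 0 := by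
    intro k
    by_contra hk
    apply hcon
    refine ⟨1 / ((k : ℝ) + 1), by positivity, fun S hS hSD => ?_⟩
    by_contra hno
    obtain ⟨B, hB, hB0, hBV⟩ := exists_normal hS V hV hno
    refine hk ⟨S, ‖B‖⁻¹ • B, by rwa [← frobNorm_eq], Submodule.smul_mem _ _ hB, ?_, ?_⟩
    · rw [norm_smul, norm_inv, norm_norm, inv_mul_cancel₀ (norm_ne_zero_iff.mpr hB0)]
    · intro Z hZ
      rw [smul_mul_assoc, Matrix.trace_smul, hBV Z hZ, smul_zero]
  choose S B hSD hB hB1 hBV using hex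
  have hSt : Filter.Tendsto S Filter.atTop (nhds D) := by
    refine tendsto_iff_norm_sub_tendsto_zero.mpr ?_
    exact squeeze_zero (fun _ => norm_nonneg _) (fun k => (hSD k).le)
      tendsto_one_div_add_atTop_nhds_zero_nat
  have : ProperSpace (Matrix (Fin n) (Fin n) ℝ) := FiniteDimensional.proper ℝ _
  obtain ⟨X, hX, φ, hφ, hlim⟩ := (isCompact_sphere (0 : Matrix (Fin n) (Fin n) ℝ) 1).tendsto_subseq
    (x := B) (fun k => by simp [hB1 k])
  have hSl : Filter.Tendsto (S ∘ φ) Filter.atTop (nhds D) := hSt.comp hφ.tendsto_atTop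
  -- closed conditions pass to the limit
  have hclosed : ∀ (F : Matrix (Fin n) (Fin n) ℝ × Matrix (Fin n) (Fin n) ℝ →
      Matrix (Fin n) (Fin n) ℝ), Continuous F → (∀ k, F (B k, S k) = 0) → F (X, D) = 0 := by
    intro F hF h0
    have h1 : Filter.Tendsto (fun k => F ((B ∘ φ) k, (S ∘ φ) k)) Filter.atTop
        (nhds (F (X, D))) := (hF.tendsto (X, D)).comp (hlim.prodMk_nhds hSl)
    have h2 : (fun k => F ((B ∘ φ) k, (S ∘ φ) k)) = fun _ => 0 := funext fun k => h0 (φ k)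
    rw [h2] at h1
    exact (tendsto_nhds_unique h1 tendsto_const_nhds)
  have hclosed' : ∀ (F : Matrix (Fin n) (Fin n) ℝ × Matrix (Fin n) (Fin n) ℝ → ℝ),
      Continuous F → (∀ k, F (B k, S k) = 0) → F (X, D) = 0 := by
    intro F hF h0
    have h1 : Filter.Tendsto (fun k => F ((B ∘ φ) k, (S ∘ φ) k)) Filter.atTop
        (nhds (F (X, D))) := (hF.tendsto (X, D)).comp (hlim.prodMk_nhds hSl)
    have h2 : (fun k => F ((B ∘ φ) k, (S ∘ φ) k)) = fun _ => 0 := funext fun k => h0 (φ k)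
    rw [h2] at h1
    exact (tendsto_nhds_unique h1 tendsto_const_nhds)
  have hXnu : X ∈ algNu D := by
    refine ⟨⟨?_, ?_⟩, ?_, fun p => ?_⟩
    · have := hclosed (fun q => q.1ᵀ - q.1) (by fun_prop) (fun k => sub_eq_zero.mpr (hB k).1.1)
      exact sub_eq_zero.mp this
    · exact hclosed' (fun q => q.1.trace) (continuous_fst.matrix_trace) (fun k => (hB k).1.2)
    · have := hclosed (fun q => q.1 * q.2 - q.2 * q.1)
        ((continuous_fst.matrix_mul continuous_snd).sub (continuous_snd.matrix_mul continuous_fst))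
        (fun k => sub_eq_zero.mpr (hB k).2.1)
      exact sub_eq_zero.mp this
    · exact hclosed' (fun q => (q.1 * Polynomial.aeval q.2 p).trace)
        ((continuous_fst.matrix_mul (p.continuous_aeval.comp continuous_snd)).matrix_trace)
        (fun k => (hB k).2.2 p)
  have hXV : ∀ Z ∈ V, (X * Z).trace = 0 := fun Z hZ =>
    hclosed' (fun q => (q.1 * Z).trace)
      ((continuous_fst.matrix_mul continuous_const).matrix_trace) (fun k => hBV k Z hZ)
  obtain ⟨Y, hY, Z, hZ, hXYZ⟩ := htrans X hXnu.1
  have h1 : (Y * X).trace = 0 := hY.2 X (by rw [nu_eq hD]; exact hXnu)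
  have h2 : (X * X).trace = 0 := by
    conv_lhs => rw [hXYZ, mul_add]
    rw [← hXYZ, Matrix.trace_add, Matrix.trace_mul_comm X Y, h1, hXV Z hZ, add_zero]
  have h3 : ‖X‖ = 0 := by
    rw [← frobNorm_eq, frobNorm, hXnu.1.1.eq, h2, Real.sqrt_zero]
  have h4 : ‖X‖ = 1 := by simpa using hX
  linarith

end TransversalityHelpers

/-- transversality of a subspace `V` to the face tangent space at `D_λ`
persists at nearby points of an adjacent face `F(𝔪̃)`. -/
theorem transversality_persists (n L Lt : ℕ)
    (π : Fin n → Fin L) (hπmono : Monotone π) (hπsurj : Function.Surjective π)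
    (πt : Fin n → Fin Lt) (hπtmono : Monotone πt) (hπtsurj : Function.Surjective πt)
    (hle : MultLE π πt)
    (lam : Fin n → ℝ) (hlam : Monotone lam) (hlamsum : ∑ a, lam a = 0)
    (hpattern : ∀ a b, lam a = lam b ↔ π a = π b)
    (V : Submodule ℝ (Matrix (Fin n) (Fin n) ℝ)) (hV : (V : Set _) ⊆ Sym0 n)
    (htrans : ∀ X ∈ Sym0 n, ∃ Y ∈ tauSpace (Matrix.diagonal lam), ∃ Z ∈ (V : Set _), X = Y + Z) :
    ∃ ε > (0 : ℝ), ∀ S ∈ Face πt, frobNorm (S - Matrix.diagonal lam) < ε →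
      ∀ X ∈ Sym0 n, ∃ Y ∈ tauSpace S, ∃ Z ∈ (V : Set _), X = Y + Z := by
  obtain ⟨ε, hε, h⟩ := persists_aux n (Matrix.diagonal lam)
    ⟨lam, 1, by simp, by simp⟩ V hV htrans
  refine ⟨ε, hε, fun S hS => h S ?_⟩
  obtain ⟨_, mu, _, _, P, hP, hSP⟩ := hS
  exact ⟨mu, P, hP, hSP⟩
end
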